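/- Let n be even and j be odd (so n − j is odd, and graphs containing a small loop are set equal to zero in the graph complex). Let H₁ be the decorated graph with internal vertices 1,2,3,4, θ-edges {1,2} (labeled 1) and {3,4} (labeled 2), and one η-edge oriented from 2 to 3; let H₂ be the decorated graph with internal vertices 1,2,3 and one external vertex 4, with θ-edges {1,4}, {2,4}, {3,4} labeled 1, 2, 3. Then H := (1/2)·H₁ + (1/6)·H₂ ∈ D^{2,0} is a cocycle: δH = 0 in D^{2,1}. -/

import Mathlib

/-!
Decorated graphs and the graph complex of the paper in the conventions for `n` even and
`j` odd (so `n − j` is odd): internal vertices are labeled `0, …, s-1` and external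
vertices `s, …, s+t-1`; the θ-edges are labeled (by their position in a list) and
unoriented, the η-edges are oriented; double loops are labeled and signed.  Since
`n − j` is odd, every graph with a small loop is `0` in the graph complex.
-/

/-- Raw data of a decorated graph for `n` even, `j` odd.  `thetas` is the list of
labeled θ-edges (the label of an edge being its position in the list), each stored with
an arbitrary ordering of its two endpoints; `etas` is the multiset of oriented η-edges;
`sloops` is the multiset of small loops (recorded by their vertex); `dloops` is the
list of labeled double loops `(v, ε)` at the vertex `v` with sign `ε`. -/
structure DecGraphE where
  s : ℕ
  t : ℕ
  thetas : List (ℕ × ℕ)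
  etas : Multiset (ℕ × ℕ)
  sloops : Multiset ℕ
  dloops : List (ℕ × Bool)
deriving DecidableEq

namespace DecGraphE

/-- The number of θ-edges (each loop, small or double, contributes one θ-edge). -/
def nTheta (Γ : DecGraphE) : ℕ :=
  Γ.thetas.length + Multiset.card Γ.sloops + Γ.dloops.length

/-- `ord Γ := #{θ-edges} − #{external vertices}`. -/
def ordG (Γ : DecGraphE) : ℤ := (Γ.nTheta : ℤ) - (Γ.t : ℤ)

/-- `deg Γ := 2·#{θ-edges} − 3·#{external vertices} − #{internal vertices}`. -/
def degG (Γ : DecGraphE) : ℤ := 2 * (Γ.nTheta : ℤ) - 3 * (Γ.t : ℤ) - (Γ.s : ℤ)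

/-- The relabeling map coming from the identification of the endpoints `p, q` of a
contracted edge: the merged vertex is labeled `min p q` and all labels bigger than
`max p q` are decreased by one. -/
def cmap (p q v : ℕ) : ℕ :=
  if v = max p q then min p q else if max p q < v then v - 1 else v

/-- Relabel both entries of a pair under the contraction of an edge joining `p, q`. -/
def mapPair (p q : ℕ) (x : ℕ × ℕ) : ℕ × ℕ := (cmap p q x.1, cmap p q x.2)

/-- The η-edge joining `p` and `q` has a parallel θ-edge (multiple (η,θ)-pair). -/
def hasThetaPartner (Γ : DecGraphE) (p q : ℕ) : Prop :=
  (p, q) ∈ Γ.thetas ∨ (q, p) ∈ Γ.thetas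

instance (Γ : DecGraphE) (p q : ℕ) : Decidable (Γ.hasThetaPartner p q) := by
  unfold hasThetaPartner; infer_instance

/-- Contraction of the oriented η-edge `x = (p, q)`: the endpoints are identified (the
merged vertex labeled `min p q`, labels above `max p q` decreased by one) and the edge
is deleted; if `x` has a parallel θ-edge, the pair becomes a double loop, labeled last,
with sign `+1` iff `p < q`. -/
def contractEta (Γ : DecGraphE) (x : ℕ × ℕ) : DecGraphE :=
  let p := x.1
  let q := x.2
  { s := Γ.s - 1
    t := Γ.t
    thetas := (if Γ.hasThetaPartner p q then
        Γ.thetas.eraseIdx (Γ.thetas.findIdx fun e => e == (p, q) || e == (q, p))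
      else Γ.thetas).map (mapPair p q)
    etas := (Γ.etas.erase x).map (mapPair p q)
    sloops := Γ.sloops.map (cmap p q)
    dloops := (Γ.dloops.map fun l => (cmap p q l.1, l.2)) ++
      (if Γ.hasThetaPartner p q then [(min p q, decide (p < q))] else []) }

/-- Contraction of the `i`-th θ-edge, with endpoints `p, q` (endpoints identified and
labels shifted as above, and labels of later θ-edges decreased by one): the edge is
deleted if it has an external endpoint, and it becomes a small loop if both of its
endpoints are internal. -/
def contractTheta (Γ : DecGraphE) (i : ℕ) : DecGraphE :=
  let x := Γ.thetas.getD i (0, 0)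
  let p := x.1
  let q := x.2
  { s := if Γ.s ≤ p ∨ Γ.s ≤ q then Γ.s else Γ.s - 1
    t := if Γ.s ≤ p ∨ Γ.s ≤ q then Γ.t - 1 else Γ.t
    thetas := (Γ.thetas.eraseIdx i).map (mapPair p q)
    etas := Γ.etas.map (mapPair p q)
    sloops := Γ.sloops.map (cmap p q) +
      (if Γ.s ≤ p ∨ Γ.s ≤ q then 0 else {min p q})
    dloops := Γ.dloops.map fun l => (cmap p q l.1, l.2) }

/-- The sign `τ(e)` of an oriented η-edge `e = p → q` (with our `0`-indexed vertex
labels; in the `1`-indexed labels of the paper this is `q` if `p < q`, `p + 1` else). -/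
def tauEta (x : ℕ × ℕ) : ℕ := if x.1 < x.2 then x.2 + 1 else x.1 + 2

/-- The sign `τ(e) = i + s + 1` of the `i`-th θ-edge (paper's `1`-based conventions;
here `i` is the `0`-based position in the list, whence `i + s + 2`). -/
def tauTheta (Γ : DecGraphE) (i : ℕ) : ℕ := i + Γ.s + 2

/-- The coboundary `δΓ := Σ_e (−1)^{τ(e)} Γ/e` of a single decorated graph: the sum
runs over all non-loop edges of `Γ`, except the θ-edge of a multiple (η,θ)-pair, whose
contraction is not defined. -/
noncomputable def deltaSingle (Γ : DecGraphE) : DecGraphE →₀ ℝ :=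
  (Γ.etas.map fun x =>
      if x.1 ≠ x.2 then
        ((-1 : ℝ) ^ tauEta x) • Finsupp.single (Γ.contractEta x) (1 : ℝ)
      else 0).sum
  + ∑ i : Fin Γ.thetas.length,
      (if (Γ.thetas.get i).1 ≠ (Γ.thetas.get i).2 ∧
          ¬((((Γ.thetas.get i).1, (Γ.thetas.get i).2) ∈ Γ.etas) ∨
            (((Γ.thetas.get i).2, (Γ.thetas.get i).1) ∈ Γ.etas)) then
        ((-1 : ℝ) ^ Γ.tauTheta (i : ℕ)) • Finsupp.single (Γ.contractTheta (i : ℕ)) (1 : ℝ)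
      else 0)

/-- The coboundary, extended linearly to the free vector space on decorated graphs. -/
noncomputable def deltaTilde : (DecGraphE →₀ ℝ) →ₗ[ℝ] (DecGraphE →₀ ℝ) :=
  Finsupp.linearCombination ℝ deltaSingle

/-- Relabel the vertices: `σ` permutes the internal labels, `τ` the external labels. -/
def vperm (s t : ℕ) (σ : Equiv.Perm (Fin s)) (τ : Equiv.Perm (Fin t)) (v : ℕ) : ℕ :=
  if h : v < s then (σ ⟨v, h⟩ : Fin s).val
  else if h' : v - s < t then s + (τ ⟨v - s, h'⟩ : Fin t).val
  else v

/-- The graph obtained by permuting the labels of the internal vertices by `σ` and of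
the external vertices by `τ`. -/
def relabel (Γ : DecGraphE) (σ : Equiv.Perm (Fin Γ.s)) (τ : Equiv.Perm (Fin Γ.t)) :
    DecGraphE where
  s := Γ.s
  t := Γ.t
  thetas := Γ.thetas.map fun x => (vperm Γ.s Γ.t σ τ x.1, vperm Γ.s Γ.t σ τ x.2)
  etas := Γ.etas.map fun x => (vperm Γ.s Γ.t σ τ x.1, vperm Γ.s Γ.t σ τ x.2)
  sloops := Γ.sloops.map (vperm Γ.s Γ.t σ τ)
  dloops := Γ.dloops.map fun l => (vperm Γ.s Γ.t σ τ l.1, l.2)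

/-- The graph obtained by reversing the oriented η-edge `x`. -/
def reverseEta (Γ : DecGraphE) (x : ℕ × ℕ) : DecGraphE :=
  { Γ with etas := (x.2, x.1) ::ₘ Γ.etas.erase x }

/-- The graph obtained by swapping the (immaterial) stored ordering of the endpoints of
the `i`-th θ-edge. -/
def swapTheta (Γ : DecGraphE) (i : ℕ) : DecGraphE :=
  let x := Γ.thetas.getD i (0, 0)
  { Γ with thetas := Γ.thetas.set i (x.2, x.1) }

/-- The graph obtained by permuting the labels of the θ-edges by `ρ`. -/
def permThetas (Γ : DecGraphE) (ρ : Equiv.Perm (Fin Γ.thetas.length)) : DecGraphE :=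
  { Γ with thetas := List.ofFn fun i => Γ.thetas.get (ρ i) }

/-- The graph obtained by switching the sign of the `i`-th double loop. -/
def switchDloop (Γ : DecGraphE) (i : ℕ) : DecGraphE :=
  let l := Γ.dloops.getD i (0, true)
  { Γ with dloops := Γ.dloops.set i (l.1, !l.2) }

/-- The graph obtained by permuting the labels of the double loops by `ρ`. -/
def permDloops (Γ : DecGraphE) (ρ : Equiv.Perm (Fin Γ.dloops.length)) : DecGraphE :=
  { Γ with dloops := List.ofFn fun i => Γ.dloops.get (ρ i) }

/-- `Γ` has multiple edges of the same type: two vertices joined by two or more η-edges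
or by two or more θ-edges. -/
def IsMulti (Γ : DecGraphE) : Prop :=
  ∃ p q : ℕ, p ≠ q ∧
    (2 ≤ Γ.thetas.count (p, q) + Γ.thetas.count (q, p) ∨
      2 ≤ Γ.etas.count (p, q) + Γ.etas.count (q, p))

end DecGraphE

/-- The relations defining the space of graphs `𝒟^*` for `n` even and `j` odd:
`Γ' − (−1)^{j·sign σ + n·sign τ + a + b + sign ρ + sign ρ'} Γ` (with `j` odd, `n` even)
whenever `Γ'` is obtained from `Γ` by permuting the vertex labels by `σ` (internal) and
`τ` (external), reversing `a` oriented η-edges, switching `b` double-loop signs, and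
permuting the labels of the θ-edges by `ρ` and of the double loops by `ρ'` (permuting
the labels of the θ-edges yields a sign because the corresponding forms have odd
degree, while the stored ordering of the endpoints of a θ-edge is immaterial);
`Γ'' = 0` for every graph `Γ''` with multiple edges of the same type; and `Γ = 0` for
every graph `Γ` with a small loop (since `n − j` is odd). -/
def GraphRelsE : Set (DecGraphE →₀ ℝ) :=
  {r | ∃ (Γ : DecGraphE) (σ : Equiv.Perm (Fin Γ.s)) (τ : Equiv.Perm (Fin Γ.t)),
      r = Finsupp.single (Γ.relabel σ τ) 1 -
        (((Equiv.Perm.sign σ : ℤˣ) : ℤ) : ℝ) • Finsupp.single Γ 1} ∪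
  {r | ∃ (Γ : DecGraphE) (x : ℕ × ℕ), x ∈ Γ.etas ∧
      r = Finsupp.single (Γ.reverseEta x) 1 + Finsupp.single Γ 1} ∪
  {r | ∃ (Γ : DecGraphE) (i : ℕ), i < Γ.thetas.length ∧
      r = Finsupp.single (Γ.swapTheta i) 1 - Finsupp.single Γ 1} ∪
  {r | ∃ (Γ : DecGraphE) (ρ : Equiv.Perm (Fin Γ.thetas.length)),
      r = Finsupp.single (Γ.permThetas ρ) 1 -
        (((Equiv.Perm.sign ρ : ℤˣ) : ℤ) : ℝ) • Finsupp.single Γ 1} ∪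
  {r | ∃ (Γ : DecGraphE) (i : ℕ), i < Γ.dloops.length ∧
      r = Finsupp.single (Γ.switchDloop i) 1 + Finsupp.single Γ 1} ∪
  {r | ∃ (Γ : DecGraphE) (ρ : Equiv.Perm (Fin Γ.dloops.length)),
      r = Finsupp.single (Γ.permDloops ρ) 1 -
        (((Equiv.Perm.sign ρ : ℤˣ) : ℤ) : ℝ) • Finsupp.single Γ 1} ∪
  {r | ∃ Γ : DecGraphE, Γ.IsMulti ∧ r = Finsupp.single Γ 1} ∪
  {r | ∃ Γ : DecGraphE, Γ.sloops ≠ 0 ∧ r = Finsupp.single Γ 1}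

/-- The projection from the free vector space on decorated graphs to the graph complex
(its quotient by the subspace spanned by the relations). -/
noncomputable def graphProjE :
    (DecGraphE →₀ ℝ) →ₗ[ℝ] ((DecGraphE →₀ ℝ) ⧸ Submodule.span ℝ GraphRelsE) :=
  (Submodule.span ℝ GraphRelsE).mkQ

/-- The graph `H₁` of the cocycle `H`: four internal vertices `0,1,2,3`, θ-edges
`{0,1}` (labeled `1`) and `{2,3}` (labeled `2`), and one η-edge oriented `1 → 2`
(in the paper's `1`-indexed labels: θ-edges `{1,2}`, `{3,4}` and η-edge `2 → 3`). -/
def H1 : DecGraphE := ⟨4, 0, [(0, 1), (2, 3)], {(1, 2)}, 0, []⟩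

/-- The graph `H₂` of the cocycle `H`: three internal vertices `0,1,2`, one external
vertex `3`, and θ-edges `{0,3}, {1,3}, {2,3}` labeled `1, 2, 3` (in the paper's
`1`-indexed labels: internal vertices `1,2,3`, external vertex `4`). -/
def H2 : DecGraphE := ⟨3, 1, [(0, 3), (1, 3), (2, 3)], 0, 0, []⟩

/-!
Contracting a θ-edge between internal vertices creates a small loop, so only the η-edge of `H₁`
contributes to `δH₁`; its contraction is a two-edge θ-path `P`, with sign `-1`.  Each of the three
contractions of `H₂` is `P` with its vertices permuted by a permutation whose sign equals the
sign `(-1)^τ` of the contraction, so `δH₂ = 3P` and `(1/2)·δH₁ + (1/6)·δH₂ = 0`.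
-/

namespace DecGraphE

/-- The class in the graph complex `𝒟^*` of a decorated graph. -/
noncomputable def graphClass (Γ : DecGraphE) :
    (DecGraphE →₀ ℝ) ⧸ Submodule.span ℝ GraphRelsE :=
  graphProjE (Finsupp.single Γ 1)

theorem graphProjE_eq_zero_of_mem {r : DecGraphE →₀ ℝ} (hr : r ∈ GraphRelsE) :
    graphProjE r = 0 :=
  (Submodule.Quotient.mk_eq_zero _).2 (Submodule.subset_span hr)

theorem graphClass_relabel (Γ : DecGraphE) (σ : Equiv.Perm (Fin Γ.s))
    (τ : Equiv.Perm (Fin Γ.t)) :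
    graphClass (Γ.relabel σ τ) = ((Equiv.Perm.sign σ : ℤ) : ℝ) • graphClass Γ := by
  have hrel : Finsupp.single (Γ.relabel σ τ) 1 -
      ((Equiv.Perm.sign σ : ℤ) : ℝ) • Finsupp.single Γ 1 ∈ GraphRelsE :=
    .inl <| .inl <| .inl <| .inl <| .inl <| .inl <| .inl ⟨Γ, σ, τ, rfl⟩
  simpa only [graphClass, map_sub, map_smul, sub_eq_zero] using graphProjE_eq_zero_of_mem hrel

theorem graphClass_swapTheta (Γ : DecGraphE) {i : ℕ} (hi : i < Γ.thetas.length) :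
    graphClass (Γ.swapTheta i) = graphClass Γ := by
  have hrel : Finsupp.single (Γ.swapTheta i) 1 - Finsupp.single Γ 1 ∈ GraphRelsE :=
    .inl <| .inl <| .inl <| .inl <| .inl <| .inr ⟨Γ, i, hi, rfl⟩
  simpa only [graphClass, map_sub, sub_eq_zero] using graphProjE_eq_zero_of_mem hrel

theorem graphClass_eq_zero_of_sloops_ne_zero {Γ : DecGraphE} (hΓ : Γ.sloops ≠ 0) :
    graphClass Γ = 0 :=
  graphProjE_eq_zero_of_mem <| .inr ⟨Γ, hΓ, rfl⟩

theorem graphClass_contractTheta_eq_zero {Γ : DecGraphE} {i : ℕ} (hi : i < Γ.thetas.length)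
    (hΓ : Γ.thetas[i].1 < Γ.s ∧ Γ.thetas[i].2 < Γ.s) :
    graphClass (Γ.contractTheta i) = 0 :=
  graphClass_eq_zero_of_sloops_ne_zero <| by simp [contractTheta, hi, hΓ]

theorem deltaTilde_single (Γ : DecGraphE) :
    deltaTilde (Finsupp.single Γ 1) = deltaSingle Γ := by
  simp [deltaTilde]

theorem graphProjE_deltaSingle_of_thetas_internal {Γ : DecGraphE}
    (hΓ : ∀ x ∈ Γ.thetas, x.1 < Γ.s ∧ x.2 < Γ.s) :
    graphProjE (deltaSingle Γ) =
      (Γ.etas.map fun x =>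
        if x.1 ≠ x.2 then (-1 : ℝ) ^ tauEta x • graphClass (Γ.contractEta x) else 0).sum := by
  have hθ (i : Fin Γ.thetas.length) :
      graphProjE (Finsupp.single (Γ.contractTheta i) 1) = 0 :=
    graphClass_contractTheta_eq_zero i.isLt (hΓ _ (List.getElem_mem _))
  simp [-Finsupp.smul_single, deltaSingle, graphClass, map_multiset_sum, apply_ite graphProjE, hθ]

theorem graphProjE_deltaSingle_of_etas_eq_zero {Γ : DecGraphE} (hη : Γ.etas = 0)
    (hθ : ∀ x ∈ Γ.thetas, x.1 ≠ x.2) :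
    graphProjE (deltaSingle Γ) =
      ∑ i : Fin Γ.thetas.length, (-1 : ℝ) ^ Γ.tauTheta i • graphClass (Γ.contractTheta i) := by
  have hne (i : Fin Γ.thetas.length) : Γ.thetas[(i : ℕ)].1 ≠ Γ.thetas[(i : ℕ)].2 :=
    hθ _ (List.getElem_mem _)
  simp [-Finsupp.smul_single, deltaSingle, graphClass, hη, hne]

/-- The path `a — c — b` of θ-edges on three internal vertices, the edge at `a` being labeled
first; both edges are stored with the middle vertex `c` last. -/
abbrev thetaPath (a c b : Fin 3) : DecGraphE := ⟨3, 0, [(a, c), (b, c)], 0, 0, []⟩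

theorem graphClass_thetaPath_perm (σ : Equiv.Perm (Fin 3)) (a c b : Fin 3) :
    graphClass (thetaPath (σ a) (σ c) (σ b)) =
      ((Equiv.Perm.sign σ : ℤ) : ℝ) • graphClass (thetaPath a c b) := by
  have hσ : thetaPath (σ a) (σ c) (σ b) = (thetaPath a c b).relabel σ 1 := by
    simp [thetaPath, relabel, vperm]
  rw [hσ, graphClass_relabel]

theorem graphClass_thetaPath_swap {x y : Fin 3} (hxy : x ≠ y) (a c b : Fin 3) :
    graphClass (thetaPath (Equiv.swap x y a) (Equiv.swap x y c) (Equiv.swap x y b)) =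
      -graphClass (thetaPath a c b) := by
  simp [graphClass_thetaPath_perm, Equiv.Perm.sign_swap hxy]

theorem graphProjE_deltaSingle_H1 :
    graphProjE (deltaSingle H1) = -graphClass (thetaPath 0 1 2) := by
  have hswap : (H1.contractEta (1, 2)).swapTheta 1 = thetaPath 0 1 2 := by decide
  calc graphProjE (deltaSingle H1)
      = (-1 : ℝ) ^ 3 • graphClass (H1.contractEta (1, 2)) := by
        rw [graphProjE_deltaSingle_of_thetas_internal (by decide)]
        simp [H1, tauEta]
    _ = (-1 : ℝ) ^ 3 • graphClass (thetaPath 0 1 2) := by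
        rw [← hswap, graphClass_swapTheta _ (by decide)]
    _ = -graphClass (thetaPath 0 1 2) := by module

theorem graphProjE_deltaSingle_H2 :
    graphProjE (deltaSingle H2) = (3 : ℝ) • graphClass (thetaPath 0 1 2) := by
  have hfirst : graphClass (H2.contractTheta 0) = -graphClass (thetaPath 0 1 2) := by
    rw [show H2.contractTheta 0 = thetaPath 1 0 2 by decide]
    exact graphClass_thetaPath_swap (x := 0) (y := 1) (by decide) 0 1 2
  have hsecond : graphClass (H2.contractTheta 1) = graphClass (thetaPath 0 1 2) :=
    congrArg graphClass (by decide)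
  have hthird : graphClass (H2.contractTheta 2) = -graphClass (thetaPath 0 1 2) := by
    rw [show H2.contractTheta 2 = thetaPath 0 2 1 by decide]
    exact graphClass_thetaPath_swap (x := 1) (y := 2) (by decide) 0 1 2
  calc graphProjE (deltaSingle H2)
      = ∑ i : Fin 3, (-1 : ℝ) ^ (i + 5 : ℕ) • graphClass (H2.contractTheta i) :=
        graphProjE_deltaSingle_of_etas_eq_zero rfl (by decide)
    _ = (3 : ℝ) • graphClass (thetaPath 0 1 2) := by
        simp only [Fin.sum_univ_three, Fin.val_zero, Fin.val_one, Fin.val_two, hfirst, hsecond,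
          hthird]
        module

end DecGraphE

/-- (For `n` even and `j` odd.)  The element `H := (1/2)·H₁ + (1/6)·H₂` lies in
`𝒟^{2,0}` (both graphs have `ord = 2` and `deg = 0`) and is a cocycle:
`δH = 0` in `𝒟^{2,1}`. -/
theorem H_is_a_graph_cocycle :
    (H1.ordG = 2 ∧ H1.degG = 0 ∧ H2.ordG = 2 ∧ H2.degG = 0) ∧
    graphProjE (DecGraphE.deltaTilde
      ((1 / 2 : ℝ) • Finsupp.single H1 1 + (1 / 6 : ℝ) • Finsupp.single H2 1)) = 0 := by
  refine ⟨by decide, ?_⟩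
  simp only [map_add, map_smul, DecGraphE.deltaTilde_single,
    DecGraphE.graphProjE_deltaSingle_H1, DecGraphE.graphProjE_deltaSingle_H2]
  module
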